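/- Every topologically loosely Kronecker continuous flow on a compact metric space is uniquely ergodic. -/

import Mathlib

open MeasureTheory Filter Set Topology
open scoped ENNReal symmDiff

section FK

structure IsFlow {X : Type*} [TopologicalSpace X] (Φ : ℝ → X → X) : Prop where
  cont : Continuous fun p : ℝ × X => Φ p.1 p.2
  map_zero : ∀ x, Φ 0 x = x
  map_add : ∀ t s x, Φ (t + s) x = Φ s (Φ t x)

variable {X : Type*} [MetricSpace X]

/-- `x` and `y` are `(t,ε,δ)`-matchable: there are measurable `A, A' ⊆ [0,t]` of Lebesgue
measure `> (1-ε)t` and an increasing absolutely continuous onto map `h : A → A'`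
(with a.e. derivative `h'`) with `|h' - 1| < ε` and `d(φ^s x, φ^{h s} y) < δ` on `A`. -/
def Matchable (Φ : ℝ → X → X) (x y : X) (t ε δ : ℝ) : Prop :=
  ∃ (A A' : Set ℝ) (h h' : ℝ → ℝ),
    MeasurableSet A ∧ MeasurableSet A' ∧
    A ⊆ Icc 0 t ∧ A' ⊆ Icc 0 t ∧
    ENNReal.ofReal ((1 - ε) * t) < volume A ∧
    ENNReal.ofReal ((1 - ε) * t) < volume A' ∧
    MapsTo h A A' ∧ SurjOn h A A' ∧ StrictMonoOn h A ∧
    (∀ B ⊆ A, MeasurableSet B → volume (h '' B) = ENNReal.ofReal (∫ s in B, h' s)) ∧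
    (∀ s ∈ A, |h' s - 1| < ε) ∧
    (∀ s ∈ A, dist (Φ s x) (Φ (h s) y) < δ)

/-- The `(t,δ)`-gap `f̃_{t,δ}(x,y)`; by convention it equals `1` when no matching exists. -/
noncomputable def fkGap (Φ : ℝ → X → X) (t δ : ℝ) (x y : X) : ℝ :=
  sInf ({ε : ℝ | 0 < ε ∧ Matchable Φ x y t ε δ} ∪ {1})

/-- `f̃_δ(x,y) = limsup_{t → ∞} f̃_{t,δ}(x,y)`. -/
noncomputable def fkDist (Φ : ℝ → X → X) (δ : ℝ) (x y : X) : ℝ :=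
  Filter.limsup (fun t => fkGap Φ t δ x y) Filter.atTop

/-- The Feldman–Katok pseudometric for flows. -/
noncomputable def rhoFK (Φ : ℝ → X → X) (x y : X) : ℝ :=
  sInf {δ : ℝ | 0 < δ ∧ fkDist Φ δ x y < δ}

/-- Discrete `(n,δ)`-matching of cardinality `k` for a map `T`. -/
def DMatching (T : X → X) (x y : X) (n : ℕ) (δ : ℝ) (k : ℕ) : Prop :=
  ∃ (D D' : Finset ℕ) (π : ℕ → ℕ),
    D ⊆ Finset.range n ∧ D' ⊆ Finset.range n ∧ D.card = k ∧
    Set.BijOn π ↑D ↑D' ∧ StrictMonoOn π ↑D ∧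
    ∀ i ∈ D, dist (T^[i] x) (T^[π i] y) < δ

/-- The discrete `(n,δ)`-gap `f̄_{n,δ}(x,y)`. -/
noncomputable def dGap (T : X → X) (n : ℕ) (δ : ℝ) (x y : X) : ℝ :=
  1 - ((sSup {k : ℕ | DMatching T x y n δ k} : ℕ) : ℝ) / n

/-- `f̄_δ(x,y) = limsup_{n → ∞} f̄_{n,δ}(x,y)`. -/
noncomputable def dFKdist (T : X → X) (δ : ℝ) (x y : X) : ℝ :=
  Filter.limsup (fun n : ℕ => dGap T n δ x y) Filter.atTop

/-- The discrete Feldman–Katok pseudometric. -/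
noncomputable def dRhoFK (T : X → X) (x y : X) : ℝ :=
  sInf {δ : ℝ | 0 < δ ∧ dFKdist T δ x y ≤ δ}

variable [MeasurableSpace X] [BorelSpace X]

/-- The `t`-empirical measure `μ_{x,t} = (1/t) ∫_0^t δ_{φ^s x} ds`. -/
noncomputable def empMeasure (Φ : ℝ → X → X) (x : X) (t : ℝ) : Measure X :=
  (ENNReal.ofReal (1 / t)) • Measure.map (fun s => Φ s x) (volume.restrict (Icc 0 t))

/-- `x` is generic for `μ`: empirical measures converge to `μ` in the weak* topology. -/
def Generic (Φ : ℝ → X → X) (μ : Measure X) (x : X) : Prop :=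
  ∀ f : C(X, ℝ), Tendsto (fun t => ∫ z, f z ∂(empMeasure Φ x t)) atTop (𝓝 (∫ z, f z ∂μ))

def FlowInvariant (Φ : ℝ → X → X) (μ : Measure X) : Prop :=
  ∀ t : ℝ, MeasurePreserving (Φ t) μ μ

def FlowErgodic (Φ : ℝ → X → X) (μ : Measure X) : Prop :=
  FlowInvariant Φ μ ∧
    ∀ A : Set X, MeasurableSet A → (∀ t, Φ t ⁻¹' A = A) → μ A = 0 ∨ μ A = 1

/-- The Prokhorov metric. -/
noncomputable def prokhorov (μ ν : Measure X) : ℝ :=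
  sInf {ε : ℝ | 0 < ε ∧ ∀ B : Set X, MeasurableSet B →
    μ B ≤ ν (Metric.thickening ε B) + ENNReal.ofReal ε}

/-- A finite Borel partition of `X`, indexed by `ℕ` with all but finitely many cells empty. -/
structure BPartition (X : Type*) [MeasurableSpace X] where
  cells : ℕ → Set X
  measurable : ∀ j, MeasurableSet (cells j)
  disj : Pairwise (Function.onFun Disjoint cells)
  cover : ⋃ j, cells j = Set.univ
  finite : ∃ n, ∀ j, n ≤ j → cells j = ∅

/-- The partition pseudometric `d_μ(P,Q)` (infimum over orderings of
`μ {x : P(x) ≠ Q(x)}`). -/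
noncomputable def dPart (μ : Measure X) (P Q : ℕ → Set X) : ℝ :=
  ⨅ σ : Equiv.Perm ℕ, (μ (⋃ j, P j \ Q (σ j))).toReal

/-- `(t,ε,P)`-matchability with respect to a partition `P` (Ratner). -/
def PMatchable (Φ : ℝ → X → X) (P : ℕ → Set X) (x y : X) (t ε : ℝ) : Prop :=
  ∃ (A A' : Set ℝ) (h h' : ℝ → ℝ),
    MeasurableSet A ∧ MeasurableSet A' ∧
    A ⊆ Icc 0 t ∧ A' ⊆ Icc 0 t ∧
    ENNReal.ofReal ((1 - ε) * t) < volume A ∧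
    ENNReal.ofReal ((1 - ε) * t) < volume A' ∧
    MapsTo h A A' ∧ SurjOn h A A' ∧ StrictMonoOn h A ∧
    (∀ B ⊆ A, MeasurableSet B → volume (h '' B) = ENNReal.ofReal (∫ s in B, h' s)) ∧
    (∀ s ∈ A, |h' s - 1| < ε) ∧
    (∀ s ∈ A, ∀ j, Φ s x ∈ P j ↔ Φ (h s) y ∈ P j)

/-- `f_t(x,y,P)`. -/
noncomputable def fPart (Φ : ℝ → X → X) (P : ℕ → Set X) (t : ℝ) (x y : X) : ℝ :=
  sInf ({ε : ℝ | 0 < ε ∧ PMatchable Φ P x y t ε} ∪ {1})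

/-- The `(t,P)`-ball of radius `ε` centered at `x`. -/
def PBall (Φ : ℝ → X → X) (P : ℕ → Set X) (t ε : ℝ) (x : X) : Set X :=
  {y | fPart Φ P t x y < ε}

/-- `K_t(ε,P)`: minimal cardinality of an `(ε,t,P)`-cover (`⊤` if none exists). -/
noncomputable def Kt (μ : Measure X) (Φ : ℝ → X → X) (P : ℕ → Set X) (ε t : ℝ) : ℝ≥0∞ :=
  sInf ((fun C : Finset X => (C.card : ℝ≥0∞)) ''
    {C : Finset X | ENNReal.ofReal (1 - ε) < μ (⋃ x ∈ C, PBall Φ P t ε x)})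

/-- `β(u,ε,P) = liminf_{t→∞} log K_t(ε,P) / u(t)`. -/
noncomputable def betaU (μ : Measure X) (Φ : ℝ → X → X) (P : ℕ → Set X) (u : ℝ → ℝ)
    (ε : ℝ) : EReal :=
  Filter.liminf (fun t => ENNReal.log (Kt μ Φ P ε t) / (ENNReal.ofReal (u t) : EReal))
    Filter.atTop

/-- `e(u,P) = limsup_{ε→0⁺} β(u,ε,P)`. -/
noncomputable def eUP (μ : Measure X) (Φ : ℝ → X → X) (P : ℕ → Set X) (u : ℝ → ℝ) : EReal :=
  Filter.limsup (fun ε => betaU μ Φ P u ε) (𝓝[>] (0 : ℝ))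

/-- `e(Φ,u) = sup_P e(u,P)`. -/
noncomputable def ePhi (μ : Measure X) (Φ : ℝ → X → X) (u : ℝ → ℝ) : EReal :=
  ⨆ P : BPartition X, eUP μ Φ P.cells u

end FK


section Continuity

variable {X : Type*} [MetricSpace X] {Φ : ℝ → X → X}

lemma IsFlow.continuous_map (hΦ : IsFlow Φ) (t : ℝ) : Continuous (Φ t) :=
  hΦ.cont.comp (by fun_prop : Continuous fun x : X => (t, x))

lemma IsFlow.continuous_orbit (hΦ : IsFlow Φ) (x : X) : Continuous fun s => Φ s x :=
  hΦ.cont.comp (by fun_prop : Continuous fun s : ℝ => (s, x))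

end Continuity

/-- A matching distorts Lebesgue measure by a factor at most `1 + ε`. -/
lemma volume_restrict_le_map {A A' : Set ℝ} {h h' : ℝ → ℝ} {t ε : ℝ} (hA : MeasurableSet A)
    (hAt : A ⊆ Icc 0 t) (hA't : A' ⊆ Icc 0 t) (hpos : 0 < volume A')
    (hmaps : MapsTo h A A') (hsurj : SurjOn h A A') (hmono : StrictMonoOn h A)
    (hvol : ∀ B ⊆ A, MeasurableSet B → volume (h '' B) = ENNReal.ofReal (∫ s in B, h' s))
    (hder : ∀ s ∈ A, |h' s - 1| < ε) :
    ∃ g : ℝ → ℝ, Measurable g ∧ EqOn h g A ∧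
      volume.restrict A' ≤ ENNReal.ofReal (1 + ε) • (volume.restrict A).map g := by
  have himage : h '' A = A' := hmaps.image_subset.antisymm hsurj
  have hbdd : Bornology.IsBounded (h '' A) :=
    (Metric.isBounded_Icc 0 t).subset (himage ▸ hA't)
  obtain ⟨g, hg, hgA⟩ := hmono.monotoneOn.exists_monotone_extension hbdd.bddBelow hbdd.bddAbove
  refine ⟨g, hg.measurable, hgA, ?_⟩
  have hInt : IntegrableOn h' A := by
    by_contra hni
    have := hvol A subset_rfl hA
    rw [himage, integral_undef hni, ENNReal.ofReal_zero] at this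
    exact hpos.ne' this
  obtain ⟨s₀, hs₀⟩ : A.Nonempty := by
    rw [nonempty_iff_ne_empty]
    rintro rfl
    rw [image_empty] at himage
    simp [← himage] at hpos
  have hε : 0 < ε := (abs_nonneg _).trans_lt (hder s₀ hs₀)
  rw [Measure.le_iff]
  intro C hC
  have hB : MeasurableSet (A ∩ g ⁻¹' C) := hA.inter (hg.measurable hC)
  have hBfin : volume (A ∩ g ⁻¹' C) ≠ ∞ :=
    measure_ne_top_of_subset (inter_subset_left.trans hAt) (by simp)
  have hCB : C ∩ A' ⊆ h '' (A ∩ g ⁻¹' C) := by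
    rintro _ ⟨hc, hcA⟩
    obtain ⟨s, hs, rfl⟩ := hsurj hcA
    exact ⟨s, ⟨hs, by rwa [mem_preimage, ← hgA hs]⟩, rfl⟩
  have hle : ∫ s in A ∩ g ⁻¹' C, h' s ≤ (1 + ε) * volume.real (A ∩ g ⁻¹' C) := by
    calc ∫ s in A ∩ g ⁻¹' C, h' s ≤ ∫ _ in A ∩ g ⁻¹' C, (1 + ε) := by
          refine setIntegral_mono_on (hInt.mono_set inter_subset_left)
            (integrableOn_const hBfin) hB fun s hs => ?_
          linarith [(abs_lt.1 (hder s hs.1)).2]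
      _ = _ := by rw [setIntegral_const, smul_eq_mul, mul_comm]
  rw [Measure.restrict_apply hC, Measure.smul_apply, Measure.map_apply hg.measurable hC,
    Measure.restrict_apply (hg.measurable hC), smul_eq_mul, inter_comm (g ⁻¹' C)]
  calc volume (C ∩ A') ≤ volume (h '' (A ∩ g ⁻¹' C)) := measure_mono hCB
    _ = ENNReal.ofReal (∫ s in A ∩ g ⁻¹' C, h' s) := hvol _ inter_subset_left hB
    _ ≤ ENNReal.ofReal ((1 + ε) * volume.real (A ∩ g ⁻¹' C)) := ENNReal.ofReal_le_ofReal hle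
    _ = _ := by rw [ENNReal.ofReal_mul (by linarith), ofReal_measureReal hBfin]

/-- The integral of a nonnegative observable along the orbit of `y` is controlled by the one
along the orbit of any `x` matched with `y`. -/
lemma Matchable.setIntegral_le {X : Type*} [MetricSpace X] {Φ : ℝ → X → X}
    (hΦ : IsFlow Φ) {f : X → ℝ} (hfc : Continuous f) {M ω t ε δ : ℝ}
    (hf : ∀ z, 0 ≤ f z) (hM : ∀ z, f z ≤ M) (hω : 0 ≤ ω) (ht : 0 < t) (hε : 0 < ε)
    (hδ : ∀ a b, dist a b < δ → f b ≤ f a + ω) {x y : X} (hm : Matchable Φ x y t ε δ) :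
    ∫ s in Icc 0 t, f (Φ s y) ≤
      (1 + ε) * ((∫ s in Icc 0 t, f (Φ s x)) + ω * t) + M * (ε * t) := by
  obtain ⟨A, A', h, h', hA, hA', hAt, hA't, -, hA'v, hmaps, hsurj, hmono, hvol, hder, hdist⟩ := hm
  obtain ⟨g, hg, hgA, hle⟩ := volume_restrict_le_map hA hAt hA't
    (bot_le.trans_lt hA'v) hmaps hsurj hmono hvol hder
  have hcont : ∀ z, Continuous fun s => f (Φ s z) := fun z =>
    hfc.comp (hΦ.continuous_orbit z)
  have hInt : ∀ z, IntegrableOn (fun s => f (Φ s z)) (Icc 0 t) := fun z =>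
    (hcont z).continuousOn.integrableOn_compact isCompact_Icc
  have hM0 : 0 ≤ M := (hf x).trans (hM x)
  have hAfin : volume A ≠ ∞ := measure_ne_top_of_subset hAt (by simp)
  have hA'fin : volume A' ≠ ∞ := measure_ne_top_of_subset hA't (by simp)
  have : IsFiniteMeasure (volume.restrict A) := ⟨by simpa using hAfin.lt_top⟩
  have hIcc : volume.real (Icc 0 t) = t := by simp [Measure.real, ht.le]
  have hAreal : volume.real A ≤ t := hIcc ▸ measureReal_mono hAt (by simp)
  have hA'real : (1 - ε) * t ≤ volume.real A' :=
    (ENNReal.ofReal_le_iff_le_toReal hA'fin).1 hA'v.le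
  have hbdd : ∀ z, ‖f z‖ ≤ M := fun z => by
    rw [Real.norm_of_nonneg (hf z)]; exact hM z
  have hcompl : ∫ s in Icc 0 t \ A', f (Φ s y) ≤ M * (ε * t) := by
    calc ∫ s in Icc 0 t \ A', f (Φ s y) ≤ ∫ _ in Icc 0 t \ A', M :=
          setIntegral_mono_on ((hInt y).mono_set sdiff_subset)
            (integrableOn_const (measure_ne_top_of_subset sdiff_subset (by simp)))
            (measurableSet_Icc.diff hA') fun s _ => hM _
      _ = M * (t - volume.real A') := by
          rw [setIntegral_const, smul_eq_mul, measureReal_sdiff hA't hA' (by simp), hIcc, mul_comm]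
      _ ≤ _ := by gcongr; linarith
  have hgint : Integrable (fun s => f (Φ (g s) y)) (volume.restrict A) :=
    Integrable.of_bound ((hcont y).measurable.comp hg).aestronglyMeasurable M
      (ae_of_all _ fun s => hbdd _)
  have hmatched : ∫ s in A', f (Φ s y) ≤ (1 + ε) * ∫ s in A, f (Φ (g s) y) := by
    calc ∫ s in A', f (Φ s y)
        ≤ ∫ s, f (Φ s y) ∂(ENNReal.ofReal (1 + ε) • (volume.restrict A).map g) := by
          refine integral_mono_measure hle (ae_of_all _ fun s => hf _) ?_
          refine Integrable.smul_measure ?_ ENNReal.ofReal_ne_top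
          exact (integrable_map_measure (hcont y).aestronglyMeasurable hg.aemeasurable).2 hgint
      _ = _ := by
          rw [integral_smul_measure, ENNReal.toReal_ofReal (by linarith), smul_eq_mul,
            integral_map hg.aemeasurable (hcont y).aestronglyMeasurable]
  have hclose : ∫ s in A, f (Φ (g s) y) ≤ (∫ s in Icc 0 t, f (Φ s x)) + ω * t := by
    calc ∫ s in A, f (Φ (g s) y) ≤ ∫ s in A, (f (Φ s x) + ω) := by
          refine setIntegral_mono_on hgint
            (((hInt x).mono_set hAt).add (integrableOn_const hAfin)) hA fun s hs => ?_
          exact hδ _ _ (hgA hs ▸ hdist s hs)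
      _ = (∫ s in A, f (Φ s x)) + ω * volume.real A := by
          rw [integral_add ((hInt x).mono_set hAt) (integrableOn_const hAfin),
            setIntegral_const, smul_eq_mul, mul_comm]
      _ ≤ _ := by
          gcongr
          · exact ae_of_all _ fun s => hf _
          · exact hInt x
  have hsplit := integral_inter_add_sdiff hA' (hInt y)
  rw [inter_eq_self_of_subset_right hA't] at hsplit
  have := mul_le_mul_of_nonneg_left hclose (by linarith : 0 ≤ 1 + ε)
  linarith

/-- Vanishing of the Feldman–Katok pseudometric yields matchings of arbitrary quality. -/
lemma exists_eventually_matchable {X : Type*} [MetricSpace X] {Φ : ℝ → X → X} {x y : X}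
    (h : rhoFK Φ x y = 0) {η : ℝ} (hη : 0 < η) :
    ∃ δ < η, ∀ᶠ t in atTop, ∃ ε, 0 < ε ∧ ε < η ∧ Matchable Φ x y t ε δ := by
  have hbelow : ∀ t δ, BddBelow ({ε : ℝ | 0 < ε ∧ Matchable Φ x y t ε δ} ∪ {1}) := by
    refine fun t δ => ⟨0, ?_⟩
    rintro ε (hε | rfl)
    exacts [hε.1.le, zero_le_one]
  have hle : ∀ t δ, fkGap Φ t δ x y ≤ 1 := fun t δ => csInf_le (hbelow t δ) (by simp)
  have hge : ∀ t δ, 0 ≤ fkGap Φ t δ x y := by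
    refine fun t δ => Real.sInf_nonneg ?_
    rintro ε (hε | rfl)
    exacts [hε.1.le, zero_le_one]
  have hne : {δ : ℝ | 0 < δ ∧ fkDist Φ δ x y < δ}.Nonempty := by
    refine ⟨2, two_pos, lt_of_le_of_lt ?_ one_lt_two⟩
    exact limsup_le_of_le (isCoboundedUnder_le_of_le atTop (x := 0) fun t => hge t 2)
      (Eventually.of_forall fun t => hle t 2)
  obtain ⟨δ, ⟨-, hδ⟩, hδη⟩ := exists_lt_of_csInf_lt hne
    (show sInf _ < min η 1 from (show rhoFK Φ x y < _ by rw [h]; positivity))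
  refine ⟨δ, hδη.trans_le (min_le_left _ _), ?_⟩
  filter_upwards [eventually_lt_of_limsup_lt hδ
    (isBoundedUnder_of ⟨1, fun t => hle t δ⟩)] with t ht
  obtain ⟨ε, hε | rfl, hεδ⟩ := exists_lt_of_csInf_lt ⟨1, by simp⟩ ht
  · exact ⟨ε, hε.1, (hεδ.trans hδη).trans_le (min_le_left _ _), hε.2⟩
  · exact absurd (hεδ.trans hδη) (by simp)

/-- The time average of `f` over `[0, t]` along the orbit of `x`. -/
noncomputable def timeAverage {X : Type*} (Φ : ℝ → X → X) (f : X → ℝ) (t : ℝ) (x : X) : ℝ :=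
  t⁻¹ * ∫ s in Icc 0 t, f (Φ s x)

section Integrals

variable {X : Type*} [MetricSpace X] [MeasurableSpace X] [BorelSpace X] {Φ : ℝ → X → X}

lemma FlowInvariant.integral_comp {μ : Measure X} (hμ : FlowInvariant Φ μ) (f : C(X, ℝ)) (s : ℝ) :
    ∫ x, f (Φ s x) ∂μ = ∫ x, f x ∂μ := by
  rw [← integral_map (hμ s).measurable.aemeasurable f.continuous.aestronglyMeasurable,
    (hμ s).map_eq]

lemma isProbabilityMeasure_empMeasure (hΦ : IsFlow Φ) (x : X) {t : ℝ} (ht : 0 < t) :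
    IsProbabilityMeasure (empMeasure Φ x t) := by
  have hm : Measurable fun s => Φ s x := (hΦ.continuous_orbit x).measurable
  constructor
  rw [empMeasure, Measure.smul_apply, Measure.map_apply hm MeasurableSet.univ]
  simp only [preimage_univ, Measure.restrict_apply_univ, Real.volume_Icc, sub_zero, smul_eq_mul]
  rw [← ENNReal.ofReal_mul (by positivity), one_div_mul_cancel ht.ne', ENNReal.ofReal_one]

lemma integral_empMeasure (hΦ : IsFlow Φ) (f : C(X, ℝ)) (x : X) {t : ℝ} (ht : 0 < t) :
    ∫ z, f z ∂(empMeasure Φ x t) = timeAverage Φ f t x := by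
  have hm : Measurable fun s => Φ s x := (hΦ.continuous_orbit x).measurable
  rw [empMeasure, integral_smul_measure, integral_map hm.aemeasurable
    f.continuous.aestronglyMeasurable, ENNReal.toReal_ofReal (by positivity), one_div]
  rfl

end Integrals

section TimeAverage

variable {X : Type*} [MetricSpace X] [CompactSpace X] {Φ : ℝ → X → X}

lemma abs_timeAverage_le (f : C(X, ℝ)) {t : ℝ} (ht : 0 < t) (x : X) :
    |timeAverage Φ f t x| ≤ ‖f‖ := by
  have : ‖∫ s in Icc 0 t, f (Φ s x)‖ ≤ ‖f‖ * volume.real (Icc 0 t) :=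
    norm_setIntegral_le_of_norm_le_const (by simp) fun s _ => f.norm_coe_le_norm _
  rw [Measure.real, Real.volume_Icc, sub_zero, ENNReal.toReal_ofReal ht.le, Real.norm_eq_abs]
    at this
  rw [timeAverage, abs_mul, abs_of_pos (inv_pos.2 ht)]
  calc t⁻¹ * _ ≤ t⁻¹ * (‖f‖ * t) := by gcongr
    _ = ‖f‖ := by field_simp

lemma eventually_timeAverage_le (hΦ : IsFlow Φ) (f : C(X, ℝ)) (hf : ∀ z, 0 ≤ f z) {x y : X}
    (h : rhoFK Φ x y = 0) {κ : ℝ} (hκ : 0 < κ) :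
    ∀ᶠ t in atTop, timeAverage Φ f t y ≤ timeAverage Φ f t x + κ := by
  obtain ⟨η₁, hη₁, hη₁f⟩ := Metric.uniformContinuous_iff.1
    (CompactSpace.uniformContinuous_of_continuous f.continuous) (κ / 4) (by positivity)
  set η₂ := κ / (4 * (‖f‖ + κ)) with hη₂
  have hη₂pos : 0 < η₂ := by positivity
  obtain ⟨δ, hδ, hev⟩ := exists_eventually_matchable h (lt_min hη₁ hη₂pos)
  filter_upwards [hev, eventually_gt_atTop 0] with t ⟨ε, hε, hεη, hm⟩ ht
  have hM : ∀ z, f z ≤ ‖f‖ := fun z => (le_abs_self _).trans (f.norm_coe_le_norm z)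
  have key := hm.setIntegral_le hΦ f.continuous hf hM (ω := κ / 4) (by positivity) ht hε
    fun a b hab => by
      have := hη₁f (hab.trans (hδ.trans_le (min_le_left _ _)))
      rw [Real.dist_eq, abs_lt] at this
      linarith
  have hx := (le_abs_self _).trans (abs_timeAverage_le (Φ := Φ) f ht x)
  have key' : timeAverage Φ f t y ≤
      (1 + ε) * (timeAverage Φ f t x + κ / 4) + ‖f‖ * ε := by
    calc timeAverage Φ f t y ≤ t⁻¹ * _ := mul_le_mul_of_nonneg_left key (inv_pos.2 ht).le
      _ = _ := by rw [timeAverage]; field_simp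
  have hεκ : ε * (‖f‖ + κ) ≤ κ / 4 := by
    have : ε ≤ η₂ := (hεη.trans_le (min_le_right _ _)).le
    calc ε * (‖f‖ + κ) ≤ η₂ * (‖f‖ + κ) := by gcongr
      _ = κ / 4 := by rw [hη₂]; field_simp
  have := mul_le_mul_of_nonneg_left hx hε.le
  have := mul_pos hε hκ
  nlinarith

lemma tendsto_timeAverage_sub (hΦ : IsFlow Φ) (f : C(X, ℝ)) (hf : ∀ z, 0 ≤ f z)
    (h : ∀ x y, rhoFK Φ x y = 0) (x y : X) :
    Tendsto (fun t => timeAverage Φ f t x - timeAverage Φ f t y) atTop (𝓝 0) := by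
  rw [Metric.tendsto_nhds]
  intro κ hκ
  filter_upwards [eventually_timeAverage_le hΦ f hf (h x y) (half_pos hκ),
    eventually_timeAverage_le hΦ f hf (h y x) (half_pos hκ)] with t h₁ h₂
  rw [Real.dist_eq, sub_zero, abs_lt]
  constructor <;> linarith

/-- Time averages are asymptotically invariant under the flow. -/
lemma tendsto_timeAverage_comp_sub (hΦ : IsFlow Φ) (f : C(X, ℝ)) (r : ℝ) (x : X) :
    Tendsto (fun t => timeAverage Φ (fun z => f (Φ r z)) t x - timeAverage Φ f t x) atTop
      (𝓝 0) := by
  have hc : Continuous fun s => f (Φ s x) :=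
    f.continuous.comp (hΦ.continuous_orbit x)
  have hi : ∀ a b : ℝ, IntervalIntegrable (fun s => f (Φ s x)) volume a b := fun a b =>
    hc.intervalIntegrable a b
  have hbound : ∀ a b : ℝ, |∫ s in a..b, f (Φ s x)| ≤ ‖f‖ * |b - a| := fun a b =>
    intervalIntegral.norm_integral_le_of_norm_le_const fun s _ => f.norm_coe_le_norm _
  have hzero : Tendsto (fun t : ℝ => t⁻¹ * (2 * (‖f‖ * |r|))) atTop (𝓝 0) := by
    simpa using tendsto_inv_atTop_zero.mul_const (2 * (‖f‖ * |r|))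
  refine squeeze_zero_norm' ?_ hzero
  filter_upwards [eventually_gt_atTop 0] with t ht
  have hshift : ∫ s in (0 : ℝ)..t, f (Φ r (Φ s x)) = ∫ s in r..(t + r), f (Φ s x) := by
    simp only [← hΦ.map_add]
    rw [intervalIntegral.integral_comp_add_right (fun s => f (Φ s x)), zero_add]
  have hsplit : (∫ s in r..(t + r), f (Φ s x)) - ∫ s in (0 : ℝ)..t, f (Φ s x) =
      (∫ s in t..(t + r), f (Φ s x)) - ∫ s in (0 : ℝ)..r, f (Φ s x) := by
    have h₁ := intervalIntegral.integral_add_adjacent_intervals (hi 0 r) (hi r (t + r))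
    have h₂ := intervalIntegral.integral_add_adjacent_intervals (hi 0 t) (hi t (t + r))
    linarith
  rw [timeAverage, timeAverage, integral_Icc_eq_integral_Ioc, integral_Icc_eq_integral_Ioc,
    ← intervalIntegral.integral_of_le ht.le, ← intervalIntegral.integral_of_le ht.le, hshift,
    ← mul_sub, hsplit, Real.norm_eq_abs, abs_mul, abs_of_pos (inv_pos.2 ht)]
  gcongr
  have h₁ := hbound t (t + r)
  have h₂ := hbound 0 r
  rw [add_sub_cancel_left] at h₁
  rw [sub_zero] at h₂
  linarith [abs_sub (∫ s in t..(t + r), f (Φ s x)) (∫ s in (0 : ℝ)..r, f (Φ s x))]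

variable [MeasurableSpace X] [BorelSpace X]

lemma IsFlow.integrable_prod (hΦ : IsFlow Φ) (f : C(X, ℝ)) (t : ℝ) (μ : Measure X)
    [IsProbabilityMeasure μ] :
    Integrable (Function.uncurry fun x s => f (Φ s x)) (μ.prod (volume.restrict (Icc 0 t))) := by
  refine Integrable.of_bound (Continuous.aestronglyMeasurable ?_) ‖f‖
    (ae_of_all _ fun p => f.norm_coe_le_norm _)
  exact f.continuous.comp (hΦ.cont.comp continuous_swap)

lemma FlowInvariant.integral_timeAverage (hΦ : IsFlow Φ) {μ : Measure X} [IsProbabilityMeasure μ]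
    (hμ : FlowInvariant Φ μ) (f : C(X, ℝ)) {t : ℝ} (ht : 0 < t) :
    ∫ x, timeAverage Φ f t x ∂μ = ∫ x, f x ∂μ := by
  simp only [timeAverage]
  rw [integral_const_mul, integral_integral_swap (hΦ.integrable_prod f t μ)]
  simp only [hμ.integral_comp f]
  rw [setIntegral_const, Measure.real, Real.volume_Icc, sub_zero, ENNReal.toReal_ofReal ht.le,
    smul_eq_mul]
  field_simp

lemma FlowInvariant.tendsto_timeAverage (hΦ : IsFlow Φ) (h : ∀ x y, rhoFK Φ x y = 0)
    {μ : Measure X} [IsProbabilityMeasure μ] (hμ : FlowInvariant Φ μ) (f : C(X, ℝ))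
    (hf : ∀ z, 0 ≤ f z) (y : X) :
    Tendsto (fun t => timeAverage Φ f t y) atTop (𝓝 (∫ x, f x ∂μ)) := by
  have hInt : ∀ t, Integrable (timeAverage Φ f t) μ := fun t =>
    (hΦ.integrable_prod f t μ).integral_prod_left.const_mul _
  have hlim : Tendsto (fun t => ∫ x, (timeAverage Φ f t x - timeAverage Φ f t y) ∂μ) atTop
      (𝓝 (∫ _, (0 : ℝ) ∂μ)) := by
    refine tendsto_integral_filter_of_dominated_convergence (fun _ => ‖f‖ + ‖f‖)
      (Eventually.of_forall fun t =>
        ((hInt t).sub (integrable_const _)).aestronglyMeasurable) ?_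
      (integrable_const _) (ae_of_all _ fun x => tendsto_timeAverage_sub hΦ f hf h x y)
    filter_upwards [eventually_gt_atTop 0] with t ht
    exact ae_of_all _ fun x => (norm_sub_le _ _).trans
      (add_le_add (abs_timeAverage_le f ht x) (abs_timeAverage_le f ht y))
  have hlim' := (tendsto_const_nhds (x := ∫ x, f x ∂μ)).sub hlim
  rw [integral_zero, sub_zero] at hlim'
  refine hlim'.congr' ?_
  filter_upwards [eventually_gt_atTop 0] with t ht
  rw [integral_sub (hInt t) (integrable_const _), hμ.integral_timeAverage hΦ f ht]
  simp

lemma FlowInvariant.eq_of_rhoFK_eq_zero [Nonempty X] (hΦ : IsFlow Φ) (h : ∀ x y, rhoFK Φ x y = 0)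
    {μ ν : Measure X} [IsProbabilityMeasure μ] [IsProbabilityMeasure ν]
    (hμ : FlowInvariant Φ μ) (hν : FlowInvariant Φ ν) : μ = ν := by
  refine ext_of_forall_integral_eq_of_IsFiniteMeasure fun f => ?_
  obtain ⟨y⟩ := ‹Nonempty X›
  let F : C(X, ℝ) := f.toContinuousMap + ContinuousMap.const X ‖f‖
  have hF : ∀ z, 0 ≤ F z := fun z => by
    have := neg_le_of_abs_le (f.norm_coe_le_norm z)
    change 0 ≤ f z + ‖f‖
    linarith
  have hInt : ∀ (ρ : Measure X) [IsProbabilityMeasure ρ], ∫ z, F z ∂ρ = ∫ z, f z ∂ρ + ‖f‖ := by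
    intro ρ _
    change ∫ z, (f z + ‖f‖) ∂ρ = _
    rw [integral_add (f.integrable ρ) (integrable_const _)]
    simp
  have := tendsto_nhds_unique (hμ.tendsto_timeAverage hΦ h F hF y)
    (hν.tendsto_timeAverage hΦ h F hF y)
  rw [hInt μ, hInt ν] at this
  linarith

/-- The Krylov–Bogoliubov theorem for continuous flows. -/
lemma IsFlow.exists_invariant [Nonempty X] (hΦ : IsFlow Φ) :
    ∃ μ : Measure X, IsProbabilityMeasure μ ∧ FlowInvariant Φ μ := by
  obtain ⟨x⟩ := ‹Nonempty X›
  let P : ℝ → ProbabilityMeasure X := fun t =>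
    ⟨empMeasure Φ x (max t 1), isProbabilityMeasure_empMeasure hΦ x (by positivity)⟩
  let U : Ultrafilter ℝ := Ultrafilter.of atTop
  have hU : (U : Filter ℝ) ≤ atTop := Ultrafilter.of_le _
  obtain ⟨μ, -, hμ⟩ := isCompact_univ.ultrafilter_le_nhds (U.map P) (by simp)
  have hlim : ∀ f : C(X, ℝ), Tendsto (fun t => timeAverage Φ f t x) U
      (𝓝 (∫ z, f z ∂(μ : Measure X))) := by
    intro f
    have := ProbabilityMeasure.tendsto_iff_forall_integral_tendsto.1
      (show Tendsto P U (𝓝 μ) from hμ) (BoundedContinuousFunction.mkOfCompact f)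
    refine this.congr' (hU ?_)
    filter_upwards [eventually_ge_atTop 1] with t ht
    change ∫ z, f z ∂(empMeasure Φ x (max t 1)) = _
    rw [max_eq_left ht, integral_empMeasure hΦ f x (by linarith)]
  refine ⟨μ, inferInstance, fun r => ⟨(hΦ.continuous_map r).measurable, ?_⟩⟩
  have hmap : IsProbabilityMeasure ((μ : Measure X).map (Φ r)) :=
    Measure.isProbabilityMeasure_map (hΦ.continuous_map r).measurable.aemeasurable
  refine ext_of_forall_integral_eq_of_IsFiniteMeasure fun f => ?_
  rw [integral_map (hΦ.continuous_map r).measurable.aemeasurable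
    f.continuous.aestronglyMeasurable]
  have h₁ := hlim (f.toContinuousMap.comp ⟨Φ r, hΦ.continuous_map r⟩)
  have h₂ := (tendsto_timeAverage_comp_sub hΦ f.toContinuousMap r x).mono_left hU
  have h₃ := h₂.add (hlim f.toContinuousMap)
  simp only [sub_add_cancel, zero_add] at h₃
  exact tendsto_nhds_unique h₁ h₃

end TimeAverage

theorem stmt9 {X : Type*} [MetricSpace X] [CompactSpace X] [MeasurableSpace X] [BorelSpace X] [Nonempty X] (Φ : ℝ → X → X) (hΦ : IsFlow Φ)
    (h : ∀ x y : X, rhoFK Φ x y = 0) :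
    ∃! μ : Measure X, IsProbabilityMeasure μ ∧ FlowInvariant Φ μ := by
  obtain ⟨μ, hμ, hinv⟩ := hΦ.exists_invariant
  refine ⟨μ, ⟨hμ, hinv⟩, ?_⟩
  rintro ν ⟨hν, hνinv⟩
  exact hνinv.eq_of_rhoFK_eq_zero hΦ h hinv
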